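/- Assume J̄ < ∞, J_1 > 0, J is of order α ∈ (0,∞], and p ≥ 1 + 4α′/d. Then ν₀ > 0; equivalently, there exists a constant C > 0 such that Σ_n |u_n|^{p+1} ≤ C · M[u]^{(p−1)/2} ⟨Lu,u⟩ for every u ∈ ℓ²(Z^d). -/

import Mathlib

open scoped BigOperators
open Filter Topology

noncomputable section

/-- The `ℓ^∞` norm of a lattice point of `ℤ^d`, as a natural number. -/
def latNorm {d : ℕ} (m : Fin d → ℤ) : ℕ := Finset.univ.sup fun i => (m i).natAbs

/-- The summand `J_{|m|}` for `m ≠ 0` (and `0` for `m = 0`). -/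
def JbarSummand (d : ℕ) (J : ℕ → ℝ) (m : Fin d → ℤ) : ℝ :=
  if m = 0 then 0 else J (latNorm m)

/-- `J̄ = Σ_{m ≠ 0} J_{|m|}`. -/
def Jbar (d : ℕ) (J : ℕ → ℝ) : ℝ := ∑' m : Fin d → ℤ, JbarSummand d J m

/-- The quadratic form `⟨Lu,u⟩ = (1/2) Σ_n Σ_{m ≠ n} J_{|n-m|} |u_n - u_m|²`. -/
def pairing (d : ℕ) (J : ℕ → ℝ) (u : (Fin d → ℤ) → ℂ) : ℝ :=
  (1/2) * ∑' n : Fin d → ℤ, ∑' m : Fin d → ℤ,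
    if m = n then 0 else J (latNorm (n - m)) * ‖u n - u m‖ ^ 2

/-- The mass `M[u] = Σ_n |u_n|²`. -/
def mass (d : ℕ) (u : (Fin d → ℤ) → ℂ) : ℝ := ∑' n : Fin d → ℤ, ‖u n‖ ^ 2

/-- Membership in `ℓ²(ℤ^d)`. -/
def MemL2 (d : ℕ) (u : (Fin d → ℤ) → ℂ) : Prop := Summable fun n : Fin d → ℤ => ‖u n‖ ^ 2

/-- The potential term `Σ_n |u_n|^{p+1}`. -/
def ppot (d : ℕ) (p : ℝ) (u : (Fin d → ℤ) → ℂ) : ℝ := ∑' n : Fin d → ℤ, ‖u n‖ ^ (p + 1)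

/-- The energy `H[u] = (1/2)⟨Lu,u⟩ - (1/(p+1)) Σ_n |u_n|^{p+1}`. -/
def energy (d : ℕ) (J : ℕ → ℝ) (p : ℝ) (u : (Fin d → ℤ) → ℂ) : ℝ :=
  (1/2) * pairing d J u - (1/(p+1)) * ppot d p u

/-- `I_ν = inf {H[q] : q ∈ ℓ², M[q] = ν}`. -/
def Ifun (d : ℕ) (J : ℕ → ℝ) (p : ℝ) (ν : ℝ) : ℝ :=
  sInf {x : ℝ | ∃ q, MemL2 d q ∧ mass d q = ν ∧ energy d J p q = x}

open scoped ENNReal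
/-- `J` is of order `α ∈ (0,∞]`: for finite `α`, `k^{d+α} J_k` tends to a finite positive
limit; for `α = ∞`, `k^{d+β} J_k → 0` for every `β > 0`. -/
def JOrder (d : ℕ) (J : ℕ → ℝ) (α : ℝ≥0∞) : Prop :=
  if α = ⊤ then
    ∀ β : ℝ, 0 < β → Tendsto (fun k : ℕ => (k : ℝ) ^ ((d : ℝ) + β) * J k) atTop (𝓝 0)
  else
    ∃ A : ℝ, 0 < A ∧ Tendsto (fun k : ℕ => (k : ℝ) ^ ((d : ℝ) + α.toReal) * J k) atTop (𝓝 A)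

/-- `α′ = α/2` for `α ∈ (0,2)` and `α′ = 1` for `α ∈ [2,∞]`. -/
def alphaPrime (α : ℝ≥0∞) : ℝ := if α < 2 then α.toReal / 2 else 1

/-- The Gagliardo–Nirenberg-type inequality at mass level `ν`:
`Σ_n |q_n|^{p+1} ≤ ((p+1)/2) ν^{-(p-1)/2} M[q]^{(p-1)/2} ⟨Lq,q⟩` for all `q ∈ ℓ²`. -/
def GNineq (d : ℕ) (J : ℕ → ℝ) (p ν : ℝ) : Prop :=
  ∀ q : (Fin d → ℤ) → ℂ, MemL2 d q →
    ppot d p q ≤ ((p + 1) / 2) * ν ^ (-(p - 1) / 2) * (mass d q) ^ ((p - 1) / 2) *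
      pairing d J q

/-- The excitation threshold `ν₀ = sup {ν > 0 : GN inequality holds at level ν}`,
with `ν₀ = 0` if no such `ν` exists. -/
def nuZero (d : ℕ) (J : ℕ → ℝ) (p : ℝ) : ℝ :=
  sSup (insert 0 {ν : ℝ | 0 < ν ∧ GNineq d J p ν})


lemma JbS_nonneg (d : ℕ) (J : ℕ → ℝ) (hJpos : ∀ k, 0 ≤ J k) (m : Fin d → ℤ) :
    0 ≤ JbarSummand d J m := by
  unfold JbarSummand; split_ifs
  · exact le_rfl
  · exact hJpos _

/-- the pair interaction -/
def Gp (d : ℕ) (J : ℕ → ℝ) (u : (Fin d → ℤ) → ℂ) (n m : Fin d → ℤ) : ℝ :=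
  JbarSummand d J (n - m) * ‖u n - u m‖ ^ 2

lemma pairing_eq (d : ℕ) (J : ℕ → ℝ) (u : (Fin d → ℤ) → ℂ) :
    pairing d J u = (1/2) * ∑' n, ∑' m, Gp d J u n m := by
  unfold pairing Gp JbarSummand
  congr 1
  refine tsum_congr fun n => tsum_congr fun m => ?_
  by_cases h : m = n
  · simp [h]
  · have : n - m ≠ 0 := fun h' => h (sub_eq_zero.mp h').symm
    simp [h, this]

lemma Gp_nonneg (d : ℕ) (J : ℕ → ℝ) (hJpos : ∀ k, 0 ≤ J k) (u : (Fin d → ℤ) → ℂ)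
    (n m : Fin d → ℤ) : 0 ≤ Gp d J u n m :=
  mul_nonneg (JbS_nonneg d J hJpos _) (by positivity)

lemma Gp_summable (d : ℕ) (J : ℕ → ℝ) (hJpos : ∀ k, 0 ≤ J k)
    (hJbar : Summable (JbarSummand d J)) (u : (Fin d → ℤ) → ℂ) (hu : MemL2 d u) :
    Summable (fun x : (Fin d → ℤ) × (Fin d → ℤ) => Gp d J u x.1 x.2) := by
  have h0 : Summable (fun x : (Fin d → ℤ) × (Fin d → ℤ) => ‖u x.1‖ ^ 2 * JbarSummand d J x.2) :=
    Summable.mul_of_nonneg hu hJbar (fun _ => by positivity) (fun m => JbS_nonneg d J hJpos m)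
  have h1 := h0.comp_injective (i := fun x : (Fin d → ℤ) × (Fin d → ℤ) => (x.1, x.1 - x.2)) (by
    rintro ⟨a, b⟩ ⟨a', b'⟩ h
    simp only [Prod.mk.injEq] at h
    obtain ⟨rfl, h⟩ := h
    simpa using h)
  have h2 := h0.comp_injective (i := fun x : (Fin d → ℤ) × (Fin d → ℤ) => (x.2, x.1 - x.2)) (by
    rintro ⟨a, b⟩ ⟨a', b'⟩ h
    simp only [Prod.mk.injEq] at h
    obtain ⟨rfl, h⟩ := h
    simpa using h)
  refine Summable.of_nonneg_of_le (fun x => Gp_nonneg d J hJpos u _ _) ?_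
    ((h1.mul_left 2).add (h2.mul_left 2))
  rintro ⟨n, m⟩
  simp only [Gp, Function.comp]
  have hj := JbS_nonneg d J hJpos (n - m)
  have : ‖u n - u m‖ ^ 2 ≤ 2 * ‖u n‖ ^ 2 + 2 * ‖u m‖ ^ 2 := by
    have := norm_sub_le (u n) (u m)
    have h3 := norm_nonneg (u n - u m)
    nlinarith [sq_nonneg (‖u n‖ - ‖u m‖)]
  nlinarith [mul_le_mul_of_nonneg_left this hj]

/-- cube of side R with corner K -/
def cube (d : ℕ) (K R : ℕ) : Finset (Fin d → ℤ) :=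
  Fintype.piFinset (fun _ => Finset.Ico (K : ℤ) (K + R))

lemma cube_card (d K R : ℕ) : (cube d K R).card = R ^ d := by
  simp [cube, Fintype.card_piFinset]

lemma exists_R (d : ℕ) (hd : 1 ≤ d) (t : ℝ) (ht : 1 ≤ t) :
    ∃ R : ℕ, 1 ≤ R ∧ 8 * t ≤ (R : ℝ) ^ d ∧ (R : ℝ) ≤ 16 * t ^ (1 / (d : ℝ)) := by
  have hd' : (1 : ℝ) ≤ d := by exact_mod_cast hd
  have h8 : (1 : ℝ) ≤ (8 * t) ^ (1 / (d : ℝ)) := Real.one_le_rpow (by linarith) (by positivity)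
  refine ⟨⌈(8 * t) ^ (1 / (d : ℝ))⌉₊, ?_, ?_, ?_⟩
  · exact Nat.one_le_ceil_iff.mpr (by linarith)
  · calc 8 * t = ((8 * t) ^ (1 / (d : ℝ))) ^ d := by
          rw [← Real.rpow_natCast, ← Real.rpow_mul (by linarith)]
          rw [one_div_mul_cancel (by linarith), Real.rpow_one]
      _ ≤ _ := by gcongr; exact Nat.le_ceil _
  · have h1 := (Nat.ceil_lt_add_one (show 0 ≤ (8 * t) ^ (1 / (d : ℝ)) by positivity)).le
    have h2 : (8 * t) ^ (1 / (d : ℝ)) ≤ 8 * t ^ (1 / (d : ℝ)) := by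
      rw [Real.mul_rpow (by norm_num) (by linarith)]
      gcongr
      calc (8 : ℝ) ^ (1 / (d : ℝ)) ≤ 8 ^ (1 : ℝ) := by
            apply Real.rpow_le_rpow_of_exponent_le (by norm_num)
            rw [div_le_one (by linarith)]; exact hd'
        _ = 8 := by simp
    linarith

lemma count_good (d : ℕ) (u : (Fin d → ℤ) → ℂ) (hu : MemL2 d u) (x : ℝ) (hx : 0 < x)
    (n : Fin d → ℤ) (B : Finset (Fin d → ℤ)) (hB : 8 * (mass d u / x ^ 2) ≤ (B.card : ℝ)) :
    (B.card : ℝ) / 2 ≤ ((B.filter (fun h => ‖u (n + h)‖ < x / 2)).card : ℝ) := by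
  have h1 := Finset.card_filter_add_card_filter_not (s := B) (fun h => ‖u (n + h)‖ < x / 2)
  have h1' : ((B.filter (fun h => ‖u (n + h)‖ < x / 2)).card : ℝ)
    + ((B.filter (fun h => ¬ ‖u (n + h)‖ < x / 2)).card : ℝ) = B.card := by exact_mod_cast h1
  set S := B.filter (fun h => ¬ ‖u (n + h)‖ < x / 2)
  have h2 : (S.card : ℝ) * (x / 2) ^ 2 ≤ mass d u := by
    have hs : Summable (fun h => ‖u (n + h)‖ ^ 2) :=
      Summable.comp_injective hu (add_right_injective n)
    calc (S.card : ℝ) * (x / 2) ^ 2 = ∑ h ∈ S, (x / 2) ^ 2 := by simp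
      _ ≤ ∑ h ∈ S, ‖u (n + h)‖ ^ 2 := by
          apply Finset.sum_le_sum
          intro h hh
          have := (Finset.mem_filter.mp hh).2
          push Not at this
          gcongr
      _ ≤ ∑' h, ‖u (n + h)‖ ^ 2 := hs.sum_le_tsum _ (fun _ _ => by positivity)
      _ = mass d u := (Equiv.addLeft n).tsum_eq (fun m => ‖u m‖ ^ 2)
  have h3 : (S.card : ℝ) ≤ 4 * (mass d u / x ^ 2) := by
    rw [← mul_div_assoc, le_div_iff₀ (by positivity)]
    nlinarith
  linarith

lemma sq_le_mass (d : ℕ) (u : (Fin d → ℤ) → ℂ) (hu : MemL2 d u) (n : Fin d → ℤ) :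
    ‖u n‖ ^ 2 ≤ mass d u := hu.le_tsum n (fun _ _ => by positivity)

lemma latNorm_cube (d : ℕ) (hd : 1 ≤ d) (K R : ℕ) (h : Fin d → ℤ) (hh : h ∈ cube d K R) :
    K ≤ latNorm h ∧ latNorm h ≤ K + R := by
  have hh' : ∀ i, (K : ℤ) ≤ h i ∧ h i < K + R := by simpa [cube] using hh
  constructor
  · have := Finset.le_sup (f := fun i => (h i).natAbs) (Finset.mem_univ (⟨0, hd⟩ : Fin d))
    have h2 := hh' ⟨0, hd⟩
    unfold latNorm
    omega
  · apply Finset.sup_le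
    intro i _
    have := hh' i
    omega

lemma latNorm_neg {d : ℕ} (h : Fin d → ℤ) : latNorm (-h) = latNorm h := by
  simp [latNorm]

lemma caseA_point (d : ℕ) (hd : 1 ≤ d) (J : ℕ → ℝ) (hJpos : ∀ k, 0 ≤ J k)
    (hJbar : Summable (JbarSummand d J)) (a c : ℝ) (ha : 0 < a) (hc : 0 < c) (K : ℕ) (hK : 1 ≤ K)
    (hJK : ∀ k : ℕ, K ≤ k → c ≤ (k : ℝ) ^ ((d : ℝ) + a) * J k)
    (u : (Fin d → ℤ) → ℂ) (hu : MemL2 d u) (n : Fin d → ℤ) :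
    ‖u n‖ ^ (2 + 2 * (a / d)) ≤
      (((K : ℝ) + 16) ^ ((d : ℝ) + a) / c) * mass d u ^ (a / d) * ∑' m, Gp d J u n m := by
  have hd' : (1 : ℝ) ≤ d := by exact_mod_cast hd
  have hM0 : 0 ≤ mass d u := le_trans (by positivity) (sq_le_mass d u hu n)
  have hG0 : 0 ≤ ∑' m, Gp d J u n m := tsum_nonneg (fun m => Gp_nonneg d J hJpos u n m)
  have hσ : 0 < a / d := by positivity
  rcases (norm_nonneg (u n)).eq_or_lt with h0 | hx
  · rw [← h0, Real.zero_rpow (by positivity)]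
    positivity
  set x := ‖u n‖ with hxdef
  have hxM := sq_le_mass d u hu n
  have ht : 1 ≤ mass d u / x ^ 2 := by rw [le_div_iff₀ (by positivity)]; linarith
  obtain ⟨R, hR1, hR2, hR3⟩ := exists_R d hd _ ht
  set t := mass d u / x ^ 2 with htdef
  have hgood := count_good d u hu x hx n (cube d K R) (by rw [cube_card]; push_cast; exact hR2)
  set B := (cube d K R).filter (fun h => ‖u (n + h)‖ < x / 2)
  rw [cube_card] at hgood
  push_cast at hgood
  have hsum : Summable (fun m => Gp d J u n m) := (Gp_summable d J hJpos hJbar u hu).prod_factor n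
  have hsum' : Summable (fun h => Gp d J u n (n + h)) := hsum.comp_injective (add_right_injective n)
  have hKR : 0 < (K : ℝ) + R := by positivity
  set W := ((K : ℝ) + R) ^ ((d : ℝ) + a) with hW
  have hWpos : 0 < W := by positivity
  have hlow : (B.card : ℝ) * (c / W * (x / 2) ^ 2) ≤ ∑' m, Gp d J u n m := by
    calc (B.card : ℝ) * (c / W * (x / 2) ^ 2) = ∑ h ∈ B, (c / W * (x / 2) ^ 2) := by simp
      _ ≤ ∑ h ∈ B, Gp d J u n (n + h) := by
          apply Finset.sum_le_sum
          intro h hh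
          obtain ⟨hh1, hh2⟩ := Finset.mem_filter.mp hh
          obtain ⟨hk1, hk2⟩ := latNorm_cube d hd K R h hh1
          unfold Gp
          have hne : n - (n + h) ≠ 0 := by
            intro h0
            have : h = 0 := by simpa using h0
            rw [this] at hk1
            have h00 : latNorm (0 : Fin d → ℤ) ≤ 0 := Finset.sup_le (fun i _ => by simp)
            omega
          have : JbarSummand d J (n - (n + h)) = J (latNorm h) := by
            unfold JbarSummand
            rw [if_neg hne, show n - (n + h) = -h by abel, latNorm_neg]
          rw [this]
          have hJl : c / W ≤ J (latNorm h) := by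
            rw [div_le_iff₀ hWpos]
            have h1 := hJK _ hk1
            have h2 : (latNorm h : ℝ) ^ ((d : ℝ) + a) ≤ W := by
              rw [hW]; gcongr
              exact_mod_cast hk2
            nlinarith [hJpos (latNorm h)]
          have hn : x / 2 ≤ ‖u n - u (n + h)‖ := by
            have := norm_sub_norm_le (u n) (u (n + h))
            linarith
          gcongr
          exact hJpos _
      _ ≤ ∑' h, Gp d J u n (n + h) := hsum'.sum_le_tsum _ (fun _ _ => Gp_nonneg d J hJpos u _ _)
      _ = _ := (Equiv.addLeft n).tsum_eq (fun m => Gp d J u n m)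
  have hWle : W ≤ ((K : ℝ) + 16) ^ ((d : ℝ) + a) * (t * t ^ (a / d)) := by
    have h1 : (1 : ℝ) ≤ t ^ (1 / (d : ℝ)) := Real.one_le_rpow ht (by positivity)
    have h2 : (K : ℝ) + R ≤ (K + 16) * t ^ (1 / (d : ℝ)) := by
      have : (0 : ℝ) ≤ K := by positivity
      nlinarith
    calc W ≤ ((K + 16) * t ^ (1 / (d : ℝ))) ^ ((d : ℝ) + a) := by rw [hW]; gcongr
      _ = _ := by
        rw [Real.mul_rpow (by positivity) (by positivity), ← Real.rpow_mul (by linarith)]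
        congr 1
        rw [show 1 / (d : ℝ) * (d + a) = 1 + a / d by field_simp,
          Real.rpow_add (by linarith), Real.rpow_one]
  set Q := ((K : ℝ) + 16) ^ ((d : ℝ) + a)
  have hQ : 0 < Q := by positivity
  have hts : t ^ (a / d) = mass d u ^ (a / d) / x ^ (2 * (a / d)) := by
    rw [htdef, Real.div_rpow hM0 (by positivity), ← Real.rpow_natCast, ← Real.rpow_mul hx.le]
    norm_num
  have hxs : x ^ (2 + 2 * (a / d)) = x ^ 2 * x ^ (2 * (a / d)) := by
    rw [Real.rpow_add hx]; norm_num
  have ht0 : 0 < t := by linarith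
  have hMp : 0 < mass d u := lt_of_lt_of_le (by positivity) hxM
  have hlow2 : c * x ^ 2 / (Q * t ^ (a / d)) ≤ ∑' m, Gp d J u n m := by
    refine le_trans ?_ hlow
    calc c * x ^ 2 / (Q * t ^ (a / d)) = (4 * t) * (c / (Q * (t * t ^ (a / d))) * (x / 2) ^ 2) := by
          field_simp
          norm_num
      _ ≤ _ := by gcongr; linarith
  rw [hxs]
  have hMs : 0 < mass d u ^ (a / d) := by positivity
  have hxss : 0 < x ^ (2 * (a / d)) := by positivity
  calc x ^ 2 * x ^ (2 * (a / d)) = Q / c * mass d u ^ (a / d) * (c * x ^ 2 / (Q * t ^ (a / d))) := by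
        rw [hts]; field_simp
    _ ≤ _ := by gcongr

/-- energy of a real function, in the extended reals -/
def EE (d : ℕ) (J : ℕ → ℝ) (v : (Fin d → ℤ) → ℝ) : ℝ≥0∞ :=
  ∑' n, ∑' m, ENNReal.ofReal (JbarSummand d J (n - m) * (v n - v m) ^ 2)

lemma EE_step (d : ℕ) (J : ℕ → ℝ) (hJ1 : 0 < J 1)
    (v : (Fin d → ℤ) → ℝ) (e : Fin d → ℤ) (he : latNorm e ≤ 1) :
    ENNReal.ofReal (J 1) * ∑' n, ENNReal.ofReal ((v (n + e) - v n) ^ 2) ≤ EE d J v := by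
  by_cases h0 : e = 0
  · subst h0; simp
  have hl : latNorm e = 1 := by
    refine le_antisymm he ?_
    by_contra hlt
    apply h0
    ext i
    have := Finset.le_sup (f := fun i => (e i).natAbs) (Finset.mem_univ i)
    unfold latNorm at hlt
    simp only [Pi.zero_apply]
    omega
  rw [← ENNReal.tsum_mul_left]
  refine ENNReal.tsum_le_tsum fun n => ?_
  refine le_trans ?_ (ENNReal.le_tsum (n + e))
  have : JbarSummand d J (n - (n + e)) = J 1 := by
    unfold JbarSummand
    rw [show n - (n + e) = -e by abel, if_neg (by simpa using h0), latNorm_neg, hl]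
  rw [this, ← ENNReal.ofReal_mul hJ1.le, sub_sq_comm]

lemma EE_shift (d : ℕ) (J : ℕ → ℝ) (hJ1 : 0 < J 1)
    (v : (Fin d → ℤ) → ℝ) (R : ℕ) (h : Fin d → ℤ) (hh : h ∈ cube d 0 R) :
    ENNReal.ofReal (J 1) * ∑' n, ENNReal.ofReal ((v (n + h) - v n) ^ 2)
      ≤ (R : ℝ≥0∞) ^ 2 * EE d J v := by
  have hh' : ∀ i, 0 ≤ h i ∧ h i < R := by simpa [cube] using hh
  let g : ℕ → (Fin d → ℤ) := fun j i => min (h i) j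
  have hg0 : g 0 = 0 := by
    ext i; have := hh' i; simp only [g, Pi.zero_apply]; push_cast; omega
  have hgR : g R = h := by
    ext i; have := hh' i; simp only [g]; omega
  have hstep : ∀ j, latNorm (g (j + 1) - g j) ≤ 1 := by
    intro j
    refine Finset.sup_le fun i _ => ?_
    simp only [g, Pi.sub_apply]; push_cast; omega
  have hpt : ∀ n, ENNReal.ofReal ((v (n + h) - v n) ^ 2) ≤
      (R : ℝ≥0∞) * ∑ j ∈ Finset.range R,
        ENNReal.ofReal ((v (n + g (j + 1)) - v (n + g j)) ^ 2) := by
    intro n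
    have h1 : v (n + h) - v n = ∑ j ∈ Finset.range R, (v (n + g (j + 1)) - v (n + g j)) := by
      rw [Finset.sum_range_sub (fun j => v (n + g j)), hgR, hg0, add_zero]
    have h2 := sq_sum_le_card_mul_sum_sq (s := Finset.range R)
      (f := fun j => v (n + g (j + 1)) - v (n + g j))
    rw [← h1, Finset.card_range] at h2
    refine (ENNReal.ofReal_le_ofReal h2).trans ?_
    rw [ENNReal.ofReal_mul (by positivity), ENNReal.ofReal_natCast,
      ENNReal.ofReal_sum_of_nonneg (fun _ _ => by positivity)]
  calc ENNReal.ofReal (J 1) * ∑' n, ENNReal.ofReal ((v (n + h) - v n) ^ 2)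
      ≤ ENNReal.ofReal (J 1) * ∑' n, (R : ℝ≥0∞) * ∑ j ∈ Finset.range R,
        ENNReal.ofReal ((v (n + g (j + 1)) - v (n + g j)) ^ 2) := by
        gcongr with n; exact hpt n
    _ = (R : ℝ≥0∞) * ∑ j ∈ Finset.range R, ENNReal.ofReal (J 1) * ∑' n,
        ENNReal.ofReal ((v (n + g (j + 1)) - v (n + g j)) ^ 2) := by
        rw [ENNReal.tsum_mul_left, Summable.tsum_finsetSum (fun _ _ => ENNReal.summable),
          ← Finset.mul_sum]
        ring
    _ ≤ (R : ℝ≥0∞) * ∑ j ∈ Finset.range R, EE d J v := by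
        gcongr with j hj
        have h1 := EE_step d J hJ1 v _ (hstep j)
        rw [← (Equiv.addRight (g j)).tsum_eq] at h1
        refine le_trans (le_of_eq ?_) h1
        congr 1
        refine tsum_congr fun n => ?_
        simp only [Equiv.coe_addRight]
        rw [show n + g j + (g (j + 1) - g j) = n + g (j + 1) by abel]
    _ = _ := by simp; ring

/-- truncation at dyadic level k -/
def trunc (k : ℤ) (a : ℝ) : ℝ := min a ((2 : ℝ) ^ k) - min a ((2 : ℝ) ^ (k - 1))

lemma telescoping_bound (f : ℤ → ℝ) (hf : Monotone f) (L : ℝ) (hL : ∀ k, L ≤ f k) (F : Finset ℤ) :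
    ∀ x : ℤ, (∀ y ∈ F, y ≤ x) → ∑ k ∈ F, (f k - f (k - 1)) ≤ f x - L := by
  induction F using Finset.induction_on_max with
  | empty => intro x _; simp; exact hL x
  | insert a s hs ih =>
    intro x hx
    rw [Finset.sum_insert (fun h => lt_irrefl _ (hs a h))]
    have h1 := ih (a - 1) (fun y hy => by have := hs y hy; omega)
    have h2 := hf (hx a (Finset.mem_insert_self _ _))
    linarith

lemma trunc_sum_aux (a b : ℝ) (hb : 0 ≤ b) (hab : b ≤ a) (F : Finset ℤ) :
    ∑ k ∈ F, (trunc k a - trunc k b) ^ 2 ≤ (a - b) ^ 2 := by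
  let f : ℤ → ℝ := fun k => min a ((2 : ℝ) ^ k) - min b ((2 : ℝ) ^ k)
  have hfm : Monotone f := by
    intro k l hkl
    have : (2 : ℝ) ^ k ≤ 2 ^ l := zpow_le_zpow_right₀ (by norm_num) hkl
    simp only [f]
    grind
  have hf0 : ∀ k, 0 ≤ f k := by
    intro k; simp only [f]; grind
  have hfle : ∀ k, f k ≤ a - b := by
    intro k; simp only [f]; grind
  have heq : ∀ k, trunc k a - trunc k b = f k - f (k - 1) := by
    intro k; simp only [f, trunc]; ring
  have hnn : ∀ k, 0 ≤ f k - f (k - 1) := fun k => sub_nonneg.mpr (hfm (by omega))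
  obtain ⟨x, hx⟩ : ∃ x : ℤ, ∀ y ∈ F, y ≤ x := F.bddAbove
  have hs := telescoping_bound f hfm 0 hf0 F x hx
  simp only [heq]
  calc ∑ k ∈ F, (f k - f (k - 1)) ^ 2 ≤ (∑ k ∈ F, (f k - f (k - 1))) ^ 2 :=
        Finset.sum_sq_le_sq_sum_of_nonneg (fun k _ => hnn k)
    _ ≤ (a - b) ^ 2 := by
        have := Finset.sum_nonneg (s := F) (fun k _ => hnn k)
        have := hfle x
        gcongr
        linarith

lemma trunc_sum (a b : ℝ) (ha : 0 ≤ a) (hb : 0 ≤ b) (F : Finset ℤ) :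
    ∑ k ∈ F, (trunc k a - trunc k b) ^ 2 ≤ (a - b) ^ 2 := by
  rcases le_total b a with h | h
  · exact trunc_sum_aux a b hb h F
  · have := trunc_sum_aux b a ha h F
    rw [sub_sq_comm a b]
    simpa only [sub_sq_comm] using this

lemma EE_sum (d : ℕ) (J : ℕ → ℝ) (hJpos : ∀ k, 0 ≤ J k) (u : (Fin d → ℤ) → ℂ) :
    ∑' k : ℤ, EE d J (fun n => trunc k ‖u n‖) ≤ ∑' n, ∑' m, ENNReal.ofReal (Gp d J u n m) := by
  unfold EE
  rw [ENNReal.tsum_comm]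
  refine ENNReal.tsum_le_tsum fun n => ?_
  rw [ENNReal.tsum_comm]
  refine ENNReal.tsum_le_tsum fun m => ?_
  refine ENNReal.summable.tsum_le_of_sum_le fun F => ?_
  have hj := JbS_nonneg d J hJpos (n - m)
  rw [← ENNReal.ofReal_sum_of_nonneg (fun _ _ => by positivity)]
  apply ENNReal.ofReal_le_ofReal
  rw [← Finset.mul_sum]
  unfold Gp
  gcongr
  refine (trunc_sum _ _ (norm_nonneg _) (norm_nonneg _) F).trans ?_
  have := abs_norm_sub_norm_le (u n) (u m)
  rw [← sq_abs]
  gcongr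

lemma caseB_point (d : ℕ) (hd : 1 ≤ d) (u : (Fin d → ℤ) → ℂ) (hu : MemL2 d u) (n : Fin d → ℤ)
    (k : ℤ) (R : ℕ) (hk1 : (2 : ℝ) ^ k ≤ ‖u n‖) (hk2 : ‖u n‖ < (2 : ℝ) ^ (k + 1))
    (hR2 : 8 * (mass d u / ((2 : ℝ) ^ k) ^ 2) ≤ (R : ℝ) ^ d)
    (hR3 : (R : ℝ) ≤ 16 * (mass d u / ((2 : ℝ) ^ k) ^ 2) ^ (1 / (d : ℝ))) :
    ‖u n‖ ^ (2 + 4 / (d : ℝ)) * (R : ℝ) ^ (d + 2) ≤ 131072 * mass d u ^ (2 / (d : ℝ)) *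
      ∑ h ∈ cube d 0 R, (trunc k ‖u (n + h)‖ - trunc k ‖u n‖) ^ 2 := by
  have hd' : (1 : ℝ) ≤ d := by exact_mod_cast hd
  set x := (2 : ℝ) ^ k with hx
  have hx0 : 0 < x := by positivity
  have hx2 : (2 : ℝ) ^ (k + 1) = 2 * x := by rw [zpow_add_one₀ (by norm_num)]; ring
  have hxh : (2 : ℝ) ^ (k - 1) = x / 2 := by rw [zpow_sub_one₀ (by norm_num)]; ring
  rw [hx2] at hk2
  have hgood := count_good d u hu x hx0 n (cube d 0 R) (by rw [cube_card]; push_cast; exact hR2)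
  set B := (cube d 0 R).filter (fun h => ‖u (n + h)‖ < x / 2)
  rw [cube_card] at hgood
  push_cast at hgood
  have hlow : (B.card : ℝ) * (x / 2) ^ 2 ≤
      ∑ h ∈ cube d 0 R, (trunc k ‖u (n + h)‖ - trunc k ‖u n‖) ^ 2 := by
    calc (B.card : ℝ) * (x / 2) ^ 2 = ∑ h ∈ B, (x / 2) ^ 2 := by simp
      _ ≤ ∑ h ∈ B, (trunc k ‖u (n + h)‖ - trunc k ‖u n‖) ^ 2 := by
          refine Finset.sum_le_sum fun h hh => ?_
          have h1 := (Finset.mem_filter.mp hh).2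
          unfold trunc
          rw [hxh, ← hx, min_eq_left (by linarith), min_eq_left (by linarith),
            min_eq_right hk1, min_eq_right (by linarith)]
          apply le_of_eq; ring
      _ ≤ _ := Finset.sum_le_sum_of_subset_of_nonneg (Finset.filter_subset _ _)
          (fun _ _ _ => by positivity)
  have hM : 0 < mass d u := lt_of_lt_of_le (by positivity)
    ((pow_le_pow_left₀ hx0.le hk1 2).trans (sq_le_mass d u hu n))
  have hA : ‖u n‖ ^ (2 + 4 / (d : ℝ)) ≤ 64 * (x ^ 2 * x ^ (4 / (d : ℝ))) := by
    calc ‖u n‖ ^ (2 + 4 / (d : ℝ)) ≤ (2 * x) ^ (2 + 4 / (d : ℝ)) := by gcongr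
      _ = 2 ^ (2 + 4 / (d : ℝ)) * (x ^ 2 * x ^ (4 / (d : ℝ))) := by
          rw [Real.mul_rpow (by norm_num) hx0.le, Real.rpow_add hx0]; norm_num
      _ ≤ _ := by
          gcongr
          calc (2 : ℝ) ^ (2 + 4 / (d : ℝ)) ≤ 2 ^ (6 : ℝ) := by
                apply Real.rpow_le_rpow_of_exponent_le (by norm_num)
                have : 4 / (d : ℝ) ≤ 4 := by rw [div_le_iff₀ (by linarith)]; linarith
                linarith
            _ = 64 := by norm_num
  have hRR : (R : ℝ) ^ 2 ≤ 256 * (mass d u ^ (2 / (d : ℝ)) / x ^ (4 / (d : ℝ))) := by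
    calc (R : ℝ) ^ 2 ≤ (16 * (mass d u / x ^ 2) ^ (1 / (d : ℝ))) ^ 2 := by gcongr
      _ = 256 * (mass d u / x ^ 2) ^ (2 / (d : ℝ)) := by
          rw [mul_pow, ← Real.rpow_natCast (_ ^ _), ← Real.rpow_mul (by positivity)]
          norm_num
          ring_nf
      _ = _ := by
          rw [Real.div_rpow hM.le (by positivity), ← Real.rpow_natCast x, ← Real.rpow_mul hx0.le]
          norm_num
          ring_nf
  have hxd : 0 < x ^ (4 / (d : ℝ)) := by positivity
  calc ‖u n‖ ^ (2 + 4 / (d : ℝ)) * (R : ℝ) ^ (d + 2)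
      = ‖u n‖ ^ (2 + 4 / (d : ℝ)) * ((R : ℝ) ^ 2 * (R : ℝ) ^ d) := by ring
    _ ≤ (64 * (x ^ 2 * x ^ (4 / (d : ℝ)))) *
        (256 * (mass d u ^ (2 / (d : ℝ)) / x ^ (4 / (d : ℝ))) * (R : ℝ) ^ d) := by gcongr
    _ = 131072 * mass d u ^ (2 / (d : ℝ)) * ((R : ℝ) ^ d / 2 * (x / 2) ^ 2) := by
        field_simp; ring
    _ ≤ 131072 * mass d u ^ (2 / (d : ℝ)) * ((B.card : ℝ) * (x / 2) ^ 2) := by gcongr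
    _ ≤ _ := by gcongr

lemma caseB_level (d : ℕ) (hd : 1 ≤ d) (J : ℕ → ℝ) (hJ1 : 0 < J 1)
    (u : (Fin d → ℤ) → ℂ) (hu : MemL2 d u) (k : ℤ) :
    ENNReal.ofReal (J 1) * ∑' n, (if (2 : ℝ) ^ k ≤ ‖u n‖ ∧ ‖u n‖ < (2 : ℝ) ^ (k + 1) then
      ENNReal.ofReal (‖u n‖ ^ (2 + 4 / (d : ℝ))) else 0) ≤
    ENNReal.ofReal (131072 * mass d u ^ (2 / (d : ℝ))) * EE d J (fun n => trunc k ‖u n‖) := by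
  by_cases hne : ∃ n, (2 : ℝ) ^ k ≤ ‖u n‖
  swap
  · push Not at hne
    have : ∀ n, ¬ ((2 : ℝ) ^ k ≤ ‖u n‖ ∧ ‖u n‖ < (2 : ℝ) ^ (k + 1)) := fun n h => by
      linarith [hne n, h.1]
    simp [this]
  obtain ⟨n0, hn0⟩ := hne
  have hx0 : (0 : ℝ) < 2 ^ k := by positivity
  have ht : 1 ≤ mass d u / ((2 : ℝ) ^ k) ^ 2 := by
    rw [le_div_iff₀ (by positivity), one_mul]
    exact (pow_le_pow_left₀ hx0.le hn0 2).trans (sq_le_mass d u hu n0)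
  obtain ⟨R, hR1, hR2, hR3⟩ := exists_R d hd _ ht
  have hM0 : 0 ≤ mass d u := le_trans (by positivity) (sq_le_mass d u hu n0)
  set D := ENNReal.ofReal (131072 * mass d u ^ (2 / (d : ℝ))) with hD
  set v : (Fin d → ℤ) → ℝ := fun n => trunc k ‖u n‖ with hv
  have hRne : ((R : ℝ≥0∞) ^ (d + 2)) ≠ 0 := by
    have : (R : ℝ≥0∞) ≠ 0 := by exact_mod_cast (by omega : R ≠ 0)
    positivity
  have hRtop : ((R : ℝ≥0∞) ^ (d + 2)) ≠ ⊤ := ENNReal.pow_ne_top (ENNReal.natCast_ne_top R)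
  have hpt : ∀ n, (R : ℝ≥0∞) ^ (d + 2) * (if (2 : ℝ) ^ k ≤ ‖u n‖ ∧ ‖u n‖ < (2 : ℝ) ^ (k + 1) then
      ENNReal.ofReal (‖u n‖ ^ (2 + 4 / (d : ℝ))) else 0) ≤
      D * ∑ h ∈ cube d 0 R, ENNReal.ofReal ((v (n + h) - v n) ^ 2) := by
    intro n
    split_ifs with h
    · have h1 := ENNReal.ofReal_le_ofReal (caseB_point d hd u hu n k R h.1 h.2 hR2 hR3)
      rw [ENNReal.ofReal_mul (by positivity), ENNReal.ofReal_mul (by positivity),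
        ENNReal.ofReal_sum_of_nonneg (fun _ _ => by positivity),
        ENNReal.ofReal_pow (by positivity), ENNReal.ofReal_natCast, mul_comm] at h1
      exact h1
    · simp
  rw [← ENNReal.mul_le_mul_iff_right hRne hRtop]
  calc (R : ℝ≥0∞) ^ (d + 2) * (ENNReal.ofReal (J 1) * ∑' n, (if (2 : ℝ) ^ k ≤ ‖u n‖ ∧ ‖u n‖ < (2 : ℝ) ^ (k + 1) then
      ENNReal.ofReal (‖u n‖ ^ (2 + 4 / (d : ℝ))) else 0))
      = ENNReal.ofReal (J 1) * ∑' n, (R : ℝ≥0∞) ^ (d + 2) * (if (2 : ℝ) ^ k ≤ ‖u n‖ ∧ ‖u n‖ < (2 : ℝ) ^ (k + 1) then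
      ENNReal.ofReal (‖u n‖ ^ (2 + 4 / (d : ℝ))) else 0) := by
        rw [ENNReal.tsum_mul_left]; ring
    _ ≤ ENNReal.ofReal (J 1) * ∑' n, D * ∑ h ∈ cube d 0 R, ENNReal.ofReal ((v (n + h) - v n) ^ 2) := by
        exact mul_le_mul_right (ENNReal.tsum_le_tsum hpt) _
    _ = D * ∑ h ∈ cube d 0 R, ENNReal.ofReal (J 1) * ∑' n, ENNReal.ofReal ((v (n + h) - v n) ^ 2) := by
        rw [ENNReal.tsum_mul_left, Summable.tsum_finsetSum (fun _ _ => ENNReal.summable),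
          ← Finset.mul_sum]
        ring
    _ ≤ D * ∑ h ∈ cube d 0 R, (R : ℝ≥0∞) ^ 2 * EE d J v := by
        exact mul_le_mul_right (Finset.sum_le_sum fun h hh => EE_shift d J hJ1 v R h hh) _
    _ = _ := by
        rw [Finset.sum_const, cube_card, nsmul_eq_mul]; push_cast; ring

lemma caseB_total (d : ℕ) (hd : 1 ≤ d) (J : ℕ → ℝ) (hJpos : ∀ k, 0 ≤ J k) (hJ1 : 0 < J 1)
    (u : (Fin d → ℤ) → ℂ) (hu : MemL2 d u) :
    ENNReal.ofReal (J 1) * ∑' n, ENNReal.ofReal (‖u n‖ ^ (2 + 4 / (d : ℝ))) ≤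
    ENNReal.ofReal (131072 * mass d u ^ (2 / (d : ℝ))) *
      ∑' n, ∑' m, ENNReal.ofReal (Gp d J u n m) := by
  calc ENNReal.ofReal (J 1) * ∑' n, ENNReal.ofReal (‖u n‖ ^ (2 + 4 / (d : ℝ)))
      ≤ ENNReal.ofReal (J 1) * ∑' n, ∑' k : ℤ, (if (2 : ℝ) ^ k ≤ ‖u n‖ ∧ ‖u n‖ < (2 : ℝ) ^ (k + 1) then
      ENNReal.ofReal (‖u n‖ ^ (2 + 4 / (d : ℝ))) else 0) := by
        gcongr with n
        rcases (norm_nonneg (u n)).eq_or_lt with h0 | hx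
        · rw [← h0, Real.zero_rpow (by positivity)]; simp
        · obtain ⟨k, hk⟩ := exists_mem_Ico_zpow hx (y := (2 : ℝ)) (by norm_num)
          refine le_trans ?_ (ENNReal.le_tsum k)
          rw [if_pos ⟨hk.1, hk.2⟩]
    _ = ∑' k : ℤ, ENNReal.ofReal (J 1) * ∑' n, (if (2 : ℝ) ^ k ≤ ‖u n‖ ∧ ‖u n‖ < (2 : ℝ) ^ (k + 1) then
      ENNReal.ofReal (‖u n‖ ^ (2 + 4 / (d : ℝ))) else 0) := by
        rw [ENNReal.tsum_comm, ENNReal.tsum_mul_left]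
    _ ≤ ∑' k : ℤ, ENNReal.ofReal (131072 * mass d u ^ (2 / (d : ℝ))) * EE d J (fun n => trunc k ‖u n‖) :=
        ENNReal.tsum_le_tsum fun k => caseB_level d hd J hJ1 u hu k
    _ ≤ _ := by
        rw [ENNReal.tsum_mul_left]
        gcongr
        exact EE_sum d J hJpos u

lemma mass_nonneg' (d : ℕ) (u : (Fin d → ℤ) → ℂ) : 0 ≤ mass d u :=
  tsum_nonneg fun _ => by positivity

lemma pow_bound (d : ℕ) (u : (Fin d → ℤ) → ℂ) (hu : MemL2 d u) (hM : 0 < mass d u) (a b : ℝ)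
    (hb : 0 < b) (hab : b ≤ a) (n : Fin d → ℤ) :
    ‖u n‖ ^ a ≤ mass d u ^ ((a - b) / 2) * ‖u n‖ ^ b := by
  rcases (norm_nonneg (u n)).eq_or_lt with h0 | hx
  · rw [← h0, Real.zero_rpow (by linarith), Real.zero_rpow (by linarith), mul_zero]
  · calc ‖u n‖ ^ a = (‖u n‖ ^ 2) ^ ((a - b) / 2) * ‖u n‖ ^ b := by
          rw [← Real.rpow_natCast, ← Real.rpow_mul hx.le, ← Real.rpow_add hx]
          congr 1; push_cast; ring
      _ ≤ _ := by
          gcongr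
          exact sq_le_mass d u hu n

lemma summable_pow (d : ℕ) (u : (Fin d → ℤ) → ℂ) (hu : MemL2 d u) (hM : 0 < mass d u) (a : ℝ)
    (ha : 2 ≤ a) : Summable (fun n => ‖u n‖ ^ a) := by
  refine Summable.of_nonneg_of_le (fun _ => by positivity)
    (fun n => pow_bound d u hu hM a 2 (by norm_num) ha n) (Summable.mul_left _ ?_)
  have : Summable fun n => ‖u n‖ ^ 2 := hu
  simpa using this

lemma caseA (d : ℕ) (hd : 1 ≤ d) (J : ℕ → ℝ) (hJpos : ∀ k, 0 ≤ J k)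
    (hJbar : Summable (JbarSummand d J)) (a : ℝ) (ha : 0 < a) (A : ℝ) (hA : 0 < A)
    (hlim : Tendsto (fun k : ℕ => (k : ℝ) ^ ((d : ℝ) + a) * J k) atTop (𝓝 A)) :
    ∃ C : ℝ, 0 < C ∧ ∀ u : (Fin d → ℤ) → ℂ, MemL2 d u → 0 < mass d u →
      ∑' n, ‖u n‖ ^ (2 + 2 * (a / d)) ≤ C * mass d u ^ (a / d) * pairing d J u := by
  have hev := hlim.eventually (lt_mem_nhds (show A / 2 < A by linarith))
  obtain ⟨K0, hK0⟩ := eventually_atTop.mp hev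
  set K := max K0 1
  have hpt := caseA_point d hd J hJpos hJbar a (A / 2) ha (by linarith) K (le_max_right _ _)
    (fun k hk => (hK0 k (le_trans (le_max_left _ _) hk)).le)
  refine ⟨2 * (((K : ℝ) + 16) ^ ((d : ℝ) + a) / (A / 2)), by positivity, fun u hu hM => ?_⟩
  have hs := (Gp_summable d J hJpos hJbar u hu).prod
  have hd0 : (0 : ℝ) ≤ a / d := by positivity
  have h1 := (summable_pow d u hu hM _ (by linarith)).tsum_le_tsum (hpt u hu) (hs.mul_left _)
  rw [tsum_mul_left] at h1
  rw [pairing_eq]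
  refine h1.trans (le_of_eq ?_)
  ring

lemma caseB (d : ℕ) (hd : 1 ≤ d) (J : ℕ → ℝ) (hJpos : ∀ k, 0 ≤ J k)
    (hJbar : Summable (JbarSummand d J)) (hJ1 : 0 < J 1) :
    ∃ C : ℝ, 0 < C ∧ ∀ u : (Fin d → ℤ) → ℂ, MemL2 d u → 0 < mass d u →
      ∑' n, ‖u n‖ ^ (2 + 4 / (d : ℝ)) ≤ C * mass d u ^ (2 / (d : ℝ)) * pairing d J u := by
  refine ⟨2 * 131072 / J 1, by positivity, fun u hu hM => ?_⟩
  have h := caseB_total d hd J hJpos hJ1 u hu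
  have hG := Gp_summable d J hJpos hJbar u hu
  have hd0 : (0 : ℝ) ≤ 4 / d := by positivity
  have h1 : ∀ n, ∑' m, ENNReal.ofReal (Gp d J u n m) = ENNReal.ofReal (∑' m, Gp d J u n m) :=
    fun n => (ENNReal.ofReal_tsum_of_nonneg (fun m => Gp_nonneg d J hJpos u n m)
      (hG.prod_factor n)).symm
  simp only [h1] at h
  have hn : ∀ n, 0 ≤ ∑' m, Gp d J u n m := fun n => tsum_nonneg (fun m => Gp_nonneg d J hJpos u n m)
  rw [← ENNReal.ofReal_tsum_of_nonneg hn hG.prod,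
    ← ENNReal.ofReal_tsum_of_nonneg (fun _ => by positivity)
      (summable_pow d u hu hM _ (by linarith)),
    ← ENNReal.ofReal_mul hJ1.le, ← ENNReal.ofReal_mul (by positivity),
    ENNReal.ofReal_le_ofReal_iff (mul_nonneg (by positivity) (tsum_nonneg hn))] at h
  rw [pairing_eq]
  have : ∑' n, ‖u n‖ ^ (2 + 4 / (d : ℝ)) ≤
      (131072 * mass d u ^ (2 / (d : ℝ)) * ∑' n, ∑' m, Gp d J u n m) / J 1 := by
    rw [le_div_iff₀ hJ1]; linarith
  refine this.trans (le_of_eq ?_)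
  ring

lemma pairing_nonneg' (d : ℕ) (J : ℕ → ℝ) (hJpos : ∀ k, 0 ≤ J k) (u : (Fin d → ℤ) → ℂ) :
    0 ≤ pairing d J u := by
  rw [pairing_eq]
  have : 0 ≤ ∑' n, ∑' m, Gp d J u n m :=
    tsum_nonneg fun n => tsum_nonneg fun m => Gp_nonneg d J hJpos u n m
  positivity

lemma GN_main (d : ℕ) (p : ℝ) (hp : 1 < p) (J : ℕ → ℝ)
    (hJpos : ∀ k, 0 ≤ J k) (s : ℝ) (hs : 0 ≤ s) (hsp : 1 + 4 * s / d ≤ p)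
    (H : ∃ C : ℝ, 0 < C ∧ ∀ u : (Fin d → ℤ) → ℂ, MemL2 d u → 0 < mass d u →
      ∑' n, ‖u n‖ ^ (2 + 4 * s / d) ≤ C * mass d u ^ (2 * s / d) * pairing d J u) :
    ∃ C : ℝ, 0 < C ∧ ∀ u : (Fin d → ℤ) → ℂ, MemL2 d u →
        ppot d p u ≤ C * (mass d u) ^ ((p - 1) / 2) * pairing d J u := by
  obtain ⟨C, hC, H⟩ := H
  refine ⟨C, hC, fun u hu => ?_⟩
  have hP := pairing_nonneg' d J hJpos u
  have hd0 : (0 : ℝ) ≤ 4 * s / d := by positivity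
  rcases (mass_nonneg' d u).eq_or_lt with h0 | hM
  · have hz : ∀ n, ‖u n‖ = 0 := fun n => by
      have := sq_le_mass d u hu n
      rw [← h0] at this
      exact pow_eq_zero_iff (two_ne_zero) |>.mp (le_antisymm this (by positivity))
    have : ppot d p u = 0 := by
      unfold ppot
      simp only [hz, Real.zero_rpow (show p + 1 ≠ 0 by linarith), tsum_zero]
    rw [this]
    have := mass_nonneg' d u
    positivity
  · have hpt := fun n => pow_bound d u hu hM (p + 1) (2 + 4 * s / d) (by linarith) (by linarith) n
    have h1 := (summable_pow d u hu hM (p + 1) (by linarith)).tsum_le_tsum hpt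
      ((summable_pow d u hu hM _ (by linarith)).mul_left _)
    rw [tsum_mul_left] at h1
    refine h1.trans ?_
    have h2 := H u hu hM
    calc _ ≤ mass d u ^ ((p + 1 - (2 + 4 * s / d)) / 2) *
          (C * mass d u ^ (2 * s / d) * pairing d J u) := by gcongr
      _ = C * (mass d u ^ ((p + 1 - (2 + 4 * s / d)) / 2) * mass d u ^ (2 * s / d)) *
          pairing d J u := by ring
      _ = _ := by
          rw [← Real.rpow_add hM]
          congr 3
          ring

lemma nuZero_pos (d : ℕ) (p : ℝ) (hp : 1 < p) (J : ℕ → ℝ)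
    (H : ∃ C : ℝ, 0 < C ∧ ∀ u : (Fin d → ℤ) → ℂ, MemL2 d u →
        ppot d p u ≤ C * (mass d u) ^ ((p - 1) / 2) * pairing d J u) :
    0 < nuZero d J p := by
  obtain ⟨C, hC, H⟩ := H
  have hp0 : 0 < p - 1 := by linarith
  have hp1 : 0 < p + 1 := by linarith
  set ν := (2 * C / (p + 1)) ^ (-2 / (p - 1)) with hν
  have hνpos : 0 < ν := by positivity
  have hmem : ν ∈ insert 0 {ν : ℝ | 0 < ν ∧ GNineq d J p ν} := by
    right
    refine ⟨hνpos, fun q hq => ?_⟩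
    have : (p + 1) / 2 * ν ^ (-(p - 1) / 2) = C := by
      rw [hν, ← Real.rpow_mul (by positivity),
        show -2 / (p - 1) * (-(p - 1) / 2) = 1 by field_simp, Real.rpow_one]
      field_simp
    rw [this]
    exact H q hq
  refine lt_of_lt_of_le hνpos (le_csSup ?_ hmem)
  let q : (Fin d → ℤ) → ℂ := Pi.single 0 1
  have hq0 : ∀ n, n ≠ 0 → q n = 0 := fun n hn => by simp [q, hn]
  have hq1 : q 0 = 1 := by simp [q]
  have hL2 : MemL2 d q := by
    refine summable_of_ne_finset_zero (s := {0}) fun n hn => ?_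
    rw [hq0 n (by simpa using hn)]; simp
  have hmass : mass d q = 1 := by
    unfold mass
    rw [tsum_eq_single 0 (fun n hn => by rw [hq0 n hn]; simp), hq1]; simp
  have hpp : ppot d p q = 1 := by
    unfold ppot
    rw [tsum_eq_single 0 (fun n hn => by
      rw [hq0 n hn, norm_zero, Real.zero_rpow hp1.ne']), hq1]
    simp
  set P := pairing d J q
  refine ⟨max 0 (((p + 1) / 2 * P) ^ (2 / (p - 1))), ?_⟩
  rintro μ (rfl | ⟨hμ, hGN⟩)
  · exact le_max_left _ _
  · refine le_trans ?_ (le_max_right _ _)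
    have h := hGN q hL2
    rw [hmass, hpp, Real.one_rpow, mul_one] at h
    have hμp : 0 < μ ^ ((p - 1) / 2) := by positivity
    rw [show -(p - 1) / 2 = -((p - 1) / 2) by ring, Real.rpow_neg hμ.le] at h
    have h2 : μ ^ ((p - 1) / 2) ≤ (p + 1) / 2 * P := by
      have := mul_le_mul_of_nonneg_left h hμp.le
      calc μ ^ ((p - 1) / 2) = μ ^ ((p - 1) / 2) * 1 := by ring
        _ ≤ _ := this
        _ = _ := by change _ * ((p + 1) / 2 * _ * P) = _; field_simp
    calc μ = (μ ^ ((p - 1) / 2)) ^ (2 / (p - 1)) := by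
          rw [← Real.rpow_mul hμ.le, show (p - 1) / 2 * (2 / (p - 1)) = 1 by field_simp,
            Real.rpow_one]
      _ ≤ _ := by gcongr

theorem stmt9 (d : ℕ) (hd : 1 ≤ d) (p : ℝ) (hp : 1 < p) (J : ℕ → ℝ)
    (hJpos : ∀ k, 0 ≤ J k) (hJbar : Summable (JbarSummand d J)) (hJ1 : 0 < J 1)
    (α : ℝ≥0∞) (hα : 0 < α) (horder : JOrder d J α)
    (hpsup : 1 + 4 * alphaPrime α / d ≤ p) :
    0 < nuZero d J p ∧
      ∃ C : ℝ, 0 < C ∧ ∀ u : (Fin d → ℤ) → ℂ, MemL2 d u →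
        ppot d p u ≤ C * (mass d u) ^ ((p - 1) / 2) * pairing d J u := by
  have hGN : ∃ C : ℝ, 0 < C ∧ ∀ u : (Fin d → ℤ) → ℂ, MemL2 d u →
        ppot d p u ≤ C * (mass d u) ^ ((p - 1) / 2) * pairing d J u := by
    by_cases h2 : α < 2
    · have htop : α ≠ ⊤ := ne_top_of_lt h2
      have ha : 0 < α.toReal := ENNReal.toReal_pos hα.ne' htop
      unfold JOrder at horder
      rw [if_neg htop] at horder
      obtain ⟨A, hA, hlim⟩ := horder
      have hs : alphaPrime α = α.toReal / 2 := if_pos h2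
      rw [hs] at hpsup
      refine GN_main d p hp J hJpos (α.toReal / 2) (by positivity) hpsup ?_
      have := caseA d hd J hJpos hJbar _ ha A hA hlim
      rw [show 2 + 4 * (α.toReal / 2) / (d : ℝ) = 2 + 2 * (α.toReal / d) by ring,
        show 2 * (α.toReal / 2) / (d : ℝ) = α.toReal / d by ring]
      exact this
    · have hs : alphaPrime α = 1 := if_neg h2
      rw [hs] at hpsup
      refine GN_main d p hp J hJpos 1 (by norm_num) hpsup ?_
      have := caseB d hd J hJpos hJbar hJ1
      simpa only [mul_one] using this
  exact ⟨nuZero_pos d p hp J hGN, hGN⟩
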